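/- The trace instrumentation is conservative: erasing the trace components of any derivation of the trace-instrumented semantics τ, S, t → τ', r yields a derivation of the plain pretty-big-step semantics S, t → r; conversely, for every derivation of S, t → r and every initial trace τ there exists a (unique) trace-instrumented derivation τ, S, t → τ', r whose erasure is the given derivation. In particular the instrumentation adds no information to the evaluation relation: S, t → r holds if and only if τ, S, t → τ', r holds for some τ'. -/

import Mathlib

/-!
The trace is a write-only accumulator: no premise of a rule inspects it, so every instrumented rule
projects to a plain rule (`TRed.erase`), and every plain rule lifts once its premises have been
lifted, the output trace of one premise being fed to the next (`Red.instrument`).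

Uniqueness of the output trace is determinism of the instrumented semantics (`TRed.deterministic`):
at most one rule applies to a configuration. The extended term selects the rule, the abort rule
applies only to terms storing an error result, on which no other rule fires, and allocation returns
the least fresh location. Determinism has to be proved for the trace and the result together, since
both outputs of the first premise are inputs of the second one.
-/

set_option autoImplicit false

/-! ## Syntax of O'While

Terms are parameterized by a type `α` of annotations (e.g. `Unit` for plain
terms, or program points for annotated terms). -/

abbrev Var := String
abbrev FieldName := String
abbrev Loc := ℕ

/-- Values: primitive (boolean) constants or locations. -/
inductive Val : Type where
  | bool : Bool → Val
  | loc : Loc → Val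
deriving DecidableEq

/-- Binary operators act on primitive (boolean) values. -/
abbrev Op := Bool → Bool → Bool

/-- Expressions: constants, variables, binary operations, object creation and
field access. -/
inductive Expr (α : Type) : Type where
  | cst : α → Bool → Expr α
  | var : α → Var → Expr α
  | bin : α → Op → Expr α → Expr α → Expr α
  | obj : α → Expr α
  | fld : α → Expr α → FieldName → Expr α

/-- Statements: skip, sequence, conditional, loop, assignment, field
assignment and field deletion. -/
inductive Stat (α : Type) : Type where
  | skip : α → Stat α
  | seq : α → Stat α → Stat α → Stat α
  | ite : α → Expr α → Stat α → Stat α → Stat α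
  | whileDo : α → Expr α → Stat α → Stat α
  | asgn : α → Var → Expr α → Stat α
  | fldAsgn : α → Expr α → FieldName → Expr α → Stat α
  | del : α → Expr α → FieldName → Stat α

/-! ## Semantic domains -/

/-- Objects are (partial) maps from fields to values. -/
abbrev ObjV : Type := FieldName → Option Val
/-- Environments map variables to values. -/
abbrev Env : Type := Var → Option Val
/-- Heaps map locations to objects. -/
abbrev Heap : Type := Loc → Option ObjV

/-- Update of a partial map. -/
def fupd {κ β : Type} [DecidableEq κ] (m : κ → Option β) (k : κ) (b : Option β) :
    κ → Option β := fun k' => if k' = k then b else m k'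

/-- Results: a state `S`, a pair of a state and a value `S, v`, or an error
`S, err`. -/
inductive Res : Type where
  | st : Env → Heap → Res
  | val : Env → Heap → Val → Res
  | err : Env → Heap → Res

/-- The state component `st(r)` of a result. -/
def Res.stateOf : Res → Env × Heap
  | .st E H => (E, H)
  | .val E H _ => (E, H)
  | .err E H => (E, H)

/-- The heap component of a result. -/
def Res.heapOf (r : Res) : Heap := r.stateOf.2

/-- Lookup of the field of an object in a heap: `H[l][f]`. -/
def hget (H : Heap) (l : Loc) (f : FieldName) : Option Val := (H l).bind fun o => o f

/-! ## Extended terms (pretty-big-step) -/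

/-- Extended terms: plain statements and expressions, plus the intermediate
syntactic constructs of the pretty-big-step semantics, storing the results of
already-evaluated subterms. -/
inductive ExtTerm (α : Type) : Type where
  | stat : Stat α → ExtTerm α
  | expr : Expr α → ExtTerm α
  | seq1 : Res → Stat α → ExtTerm α
  | if1 : Res → Stat α → Stat α → ExtTerm α
  | while1 : Res → α → Expr α → Stat α → ExtTerm α
  | while2 : Res → α → Expr α → Stat α → ExtTerm α
  | asgn1 : Var → Res → ExtTerm α
  | fldAsgn1 : Res → FieldName → Expr α → ExtTerm α
  | fldAsgn2 : Loc → FieldName → Res → ExtTerm α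
  | del1 : Res → FieldName → ExtTerm α
  | bin1 : Op → Res → Expr α → ExtTerm α
  | bin2 : Op → Val → Res → ExtTerm α
  | fld1 : Res → FieldName → ExtTerm α

def Res.errOf : Res → Option Res
  | .err E H => some (.err E H)
  | _ => none

/-- The abort function: it is defined (at least) on every extended term
containing a subterm equal to `S, err`, and propagates the error. -/
def abortFn {α : Type} : ExtTerm α → Option Res
  | .seq1 r _ => r.errOf
  | .if1 r _ _ => r.errOf
  | .while1 r _ _ _ => r.errOf
  | .while2 r _ _ _ => r.errOf
  | .asgn1 _ r => r.errOf
  | .fldAsgn1 r _ _ => r.errOf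
  | .fldAsgn2 _ _ r => r.errOf
  | .del1 r _ => r.errOf
  | .bin1 _ r _ => r.errOf
  | .bin2 _ _ r => r.errOf
  | .fld1 r _ => r.errOf
  | _ => none

/-! ## Traces -/

/-- Names of the rules of the pretty-big-step semantics. -/
inductive RuleName : Type where
  | skip | seq | seq1 | if_ | ifTrue | ifFalse
  | while_ | whileTrue1 | whileTrue2 | whileFalse
  | asg | asg1 | fldAsg | fldAsg1 | fldAsg2 | del | del1
  | cst | var | bin | bin1 | bin2 | obj | fld | fld1 | abort
deriving DecidableEq

/-- Decorations of rule names in traces: `i` marks entering the rule, `o`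
marks exiting it. -/
inductive Dir : Type where
  | i | o
deriving DecidableEq

/-- Partial traces: lists of decorated rule names. -/
abbrev Trace : Type := List (RuleName × Dir)

/-- Trace obtained when entering rule `n`. -/
def tin (n : RuleName) (τ : Trace) : Trace := τ ++ [(n, .i)]
/-- Trace obtained when exiting rule `n`. -/
def tout (n : RuleName) (τ : Trace) : Trace := τ ++ [(n, .o)]
/-- Trace produced by an axiom rule `n`: enter and exit. -/
def tax (n : RuleName) (τ : Trace) : Trace := τ ++ [(n, .i), (n, .o)]

/-! ## The plain pretty-big-step semantics

`Red E H t r` is the reduction `S, t → r` of Figure 3. -/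
inductive Red {α : Type} : Env → Heap → ExtTerm α → Res → Prop where
  | skip : ∀ (E : Env) (H : Heap) (a : α),
      Red (E) (H) (.stat (.skip a)) (.st E H)
  | seq : ∀ (E : Env) (H : Heap) (a : α)
      (s₁ s₂ : Stat α) (r : Res)
      (r' : Res),
      Red (E) (H) (.stat s₁) (r) →
      Red (E) (H) (.seq1 r s₂) (r') →
      Red (E) (H) (.stat (.seq a s₁ s₂)) (r')
  | seq1 : ∀ (E : Env) (H : Heap)
      (E' : Env) (H' : Heap) (s : Stat α) (r : Res),
      Red (E') (H') (.stat s) (r) →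
      Red (E) (H) (.seq1 (.st E' H') s) (r)
  | if_ : ∀ (E : Env) (H : Heap) (a : α)
      (e : Expr α) (s₁ s₂ : Stat α) (r : Res)
      (r' : Res),
      Red (E) (H) (.expr e) (r) →
      Red (E) (H) (.if1 r s₁ s₂) (r') →
      Red (E) (H) (.stat (.ite a e s₁ s₂)) (r')
  | ifTrue : ∀ (E : Env) (H : Heap)
      (E' : Env) (H' : Heap) (s₁ s₂ : Stat α) (r : Res),
      Red (E') (H') (.stat s₁) (r) →
      Red (E) (H) (.if1 (.val E' H' (.bool true)) s₁ s₂)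
        (r)
  | ifFalse : ∀ (E : Env) (H : Heap)
      (E' : Env) (H' : Heap) (s₁ s₂ : Stat α) (r : Res),
      Red (E') (H') (.stat s₂) (r) →
      Red (E) (H) (.if1 (.val E' H' (.bool false)) s₁ s₂)
        (r)
  | while_ : ∀ (E : Env) (H : Heap) (a : α)
      (e : Expr α) (s : Stat α) (r : Res)
      (r' : Res),
      Red (E) (H) (.expr e) (r) →
      Red (E) (H) (.while1 r a e s) (r') →
      Red (E) (H) (.stat (.whileDo a e s)) (r')
  | whileTrue1 : ∀ (E : Env) (H : Heap)
      (E' : Env) (H' : Heap) (a : α) (e : Expr α) (s : Stat α)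
      (r : Res)
      (r' : Res),
      Red (E') (H') (.stat s) (r) →
      Red (E') (H') (.while2 r a e s) (r') →
      Red (E) (H) (.while1 (.val E' H' (.bool true)) a e s)
        (r')
  | whileTrue2 : ∀ (E : Env) (H : Heap)
      (E' : Env) (H' : Heap) (a : α) (e : Expr α) (s : Stat α)
      (r : Res),
      Red (E') (H') (.stat (.whileDo a e s)) (r) →
      Red (E) (H) (.while2 (.st E' H') a e s) (r)
  | whileFalse : ∀ (E : Env) (H : Heap)
      (E' : Env) (H' : Heap) (a : α) (e : Expr α) (s : Stat α),
      Red (E) (H) (.while1 (.val E' H' (.bool false)) a e s)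
        (.st E' H')
  | asg : ∀ (E : Env) (H : Heap) (a : α)
      (x : Var) (e : Expr α) (r : Res)
      (r' : Res),
      Red (E) (H) (.expr e) (r) →
      Red (E) (H) (.asgn1 x r) (r') →
      Red (E) (H) (.stat (.asgn a x e)) (r')
  | asg1 : ∀ (E₀ : Env) (H₀ : Heap)
      (E : Env) (H : Heap) (x : Var) (v : Val),
      Red (E₀) (H₀) (.asgn1 x (.val E H v))
        (.st (fupd E x (some v)) H)
  | fldAsg : ∀ (E : Env) (H : Heap) (a : α)
      (e₁ : Expr α) (f : FieldName) (e₂ : Expr α)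
      (r : Res)
      (r' : Res),
      Red (E) (H) (.expr e₁) (r) →
      Red (E) (H) (.fldAsgn1 r f e₂) (r') →
      Red (E) (H) (.stat (.fldAsgn a e₁ f e₂)) (r')
  | fldAsg1 : ∀ (E : Env) (H : Heap)
      (E' : Env) (H' : Heap) (l : Loc) (f : FieldName) (e : Expr α)
      (r : Res)
      (r' : Res),
      Red (E') (H') (.expr e) (r) →
      Red (E') (H') (.fldAsgn2 l f r) (r') →
      Red (E) (H) (.fldAsgn1 (.val E' H' (.loc l)) f e)
        (r')
  | fldAsg2 : ∀ (E₀ : Env) (H₀ : Heap)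
      (E : Env) (H : Heap) (v : Val) (l : Loc) (f : FieldName) (o : ObjV),
      H l = some o →
      Red (E₀) (H₀) (.fldAsgn2 l f (.val E H v))
        (.st E (fupd H l (some (fupd o f (some v)))))
  | del : ∀ (E : Env) (H : Heap) (a : α)
      (e : Expr α) (f : FieldName)
      (r : Res)
      (r' : Res),
      Red (E) (H) (.expr e) (r) →
      Red (E) (H) (.del1 r f) (r') →
      Red (E) (H) (.stat (.del a e f)) (r')
  | del1 : ∀ (E₀ : Env) (H₀ : Heap)
      (E : Env) (H : Heap) (l : Loc) (f : FieldName) (o : ObjV),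
      H l = some o →
      (o f).isSome →
      Red (E₀) (H₀) (.del1 (.val E H (.loc l)) f)
        (.st E (fupd H l (some (fupd o f none))))
  | cst : ∀ (E : Env) (H : Heap)
      (a : α) (c : Bool),
      Red (E) (H) (.expr (.cst a c)) (.val E H (.bool c))
  | var : ∀ (E : Env) (H : Heap)
      (a : α) (x : Var) (v : Val),
      E x = some v →
      Red (E) (H) (.expr (.var a x))
        (.val E H v)
  | bin : ∀ (E : Env) (H : Heap)
      (a : α) (op : Op) (e₁ e₂ : Expr α)
      (r : Res)
      (r' : Res),
      Red (E) (H) (.expr e₁) (r) →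
      Red (E) (H) (.bin1 op r e₂) (r') →
      Red (E) (H) (.expr (.bin a op e₁ e₂)) (r')
  | bin1 : ∀ (E : Env) (H : Heap)
      (E' : Env) (H' : Heap) (op : Op) (v₁ : Val) (e₂ : Expr α)
      (r : Res)
      (r' : Res),
      Red (E') (H') (.expr e₂) (r) →
      Red (E') (H') (.bin2 op v₁ r) (r') →
      Red (E) (H) (.bin1 op (.val E' H' v₁) e₂) (r')
  | bin2 : ∀ (E₀ : Env) (H₀ : Heap)
      (E : Env) (H : Heap) (op : Op) (b₁ b₂ : Bool),
      Red (E₀) (H₀) (.bin2 op (.bool b₁) (.val E H (.bool b₂)))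
        (.val E H (.bool (op b₁ b₂)))
  | obj : ∀ (E : Env) (H : Heap)
      (a : α) (l : Loc),
      H l = none →
      (∀ l' : Loc, l' < l → H l' ≠ none) →
      Red (E) (H) (.expr (.obj a))
        (.val E (fupd H l (some (fun _ => none))) (.loc l))
  | fld : ∀ (E : Env) (H : Heap)
      (a : α) (e : Expr α) (f : FieldName)
      (r : Res)
      (r' : Res),
      Red (E) (H) (.expr e) (r) →
      Red (E) (H) (.fld1 r f) (r') →
      Red (E) (H) (.expr (.fld a e f)) (r')
  | fld1 : ∀ (E₀ : Env) (H₀ : Heap)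
      (E : Env) (H : Heap) (l : Loc) (f : FieldName) (o : ObjV) (v : Val),
      H l = some o →
      o f = some v →
      Red (E₀) (H₀) (.fld1 (.val E H (.loc l)) f)
        (.val E H v)
  | abort : ∀ (E : Env) (H : Heap)
      (t : ExtTerm α) (r : Res),
      abortFn t = some r →
      Red (E) (H) (t) (r)


/-- A configuration of the trace-instrumented semantics: the incoming trace
together with the state and the extended term to evaluate.  (The left trace annotation of the rule
applied at this configuration is `tin n τ` where `n` is the rule's name.) -/
structure TConf (α : Type) : Type where
  τ : Trace
  E : Env
  H : Heap
  t : ExtTerm α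

/-- An outcome of the trace-instrumented semantics: the final (right) trace
and the result. -/
structure TOut : Type where
  τ : Trace
  r : Res

/-! ## The trace-instrumented pretty-big-step semantics

`TRed ⟨τ, E, H, t⟩ ⟨τ', r⟩` is the reduction `τ, S, t → τ', r` of the paper (the trace `τ` is the
trace *before* entering the rule; the rule for `n` has left annotation
`tin n τ`). -/
inductive TRed {α : Type} : TConf α → TOut → Prop where
  | skip : ∀ (τ : Trace) (E : Env) (H : Heap) (a : α),
      TRed ⟨τ, E, H, .stat (.skip a)⟩ ⟨tax .skip τ, .st E H⟩
  | seq : ∀ (τ : Trace) (E : Env) (H : Heap) (a : α)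
      (s₁ s₂ : Stat α) (τ₂ : Trace) (r : Res)
      (τ₄ : Trace) (r' : Res),
      TRed ⟨tin .seq τ, E, H, .stat s₁⟩ ⟨τ₂, r⟩ →
      TRed ⟨τ₂, E, H, .seq1 r s₂⟩ ⟨τ₄, r'⟩ →
      TRed ⟨τ, E, H, .stat (.seq a s₁ s₂)⟩ ⟨tout .seq τ₄, r'⟩
  | seq1 : ∀ (τ : Trace) (E : Env) (H : Heap)
      (E' : Env) (H' : Heap) (s : Stat α) (τ₂ : Trace) (r : Res),
      TRed ⟨tin .seq1 τ, E', H', .stat s⟩ ⟨τ₂, r⟩ →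
      TRed ⟨τ, E, H, .seq1 (.st E' H') s⟩ ⟨tout .seq1 τ₂, r⟩
  | if_ : ∀ (τ : Trace) (E : Env) (H : Heap) (a : α)
      (e : Expr α) (s₁ s₂ : Stat α) (τ₂ : Trace) (r : Res)
      (τ₄ : Trace) (r' : Res),
      TRed ⟨tin .if_ τ, E, H, .expr e⟩ ⟨τ₂, r⟩ →
      TRed ⟨τ₂, E, H, .if1 r s₁ s₂⟩ ⟨τ₄, r'⟩ →
      TRed ⟨τ, E, H, .stat (.ite a e s₁ s₂)⟩ ⟨tout .if_ τ₄, r'⟩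
  | ifTrue : ∀ (τ : Trace) (E : Env) (H : Heap)
      (E' : Env) (H' : Heap) (s₁ s₂ : Stat α) (τ₂ : Trace) (r : Res),
      TRed ⟨tin .ifTrue τ, E', H', .stat s₁⟩ ⟨τ₂, r⟩ →
      TRed ⟨τ, E, H, .if1 (.val E' H' (.bool true)) s₁ s₂⟩
        ⟨tout .ifTrue τ₂, r⟩
  | ifFalse : ∀ (τ : Trace) (E : Env) (H : Heap)
      (E' : Env) (H' : Heap) (s₁ s₂ : Stat α) (τ₂ : Trace) (r : Res),
      TRed ⟨tin .ifFalse τ, E', H', .stat s₂⟩ ⟨τ₂, r⟩ →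
      TRed ⟨τ, E, H, .if1 (.val E' H' (.bool false)) s₁ s₂⟩
        ⟨tout .ifFalse τ₂, r⟩
  | while_ : ∀ (τ : Trace) (E : Env) (H : Heap) (a : α)
      (e : Expr α) (s : Stat α) (τ₂ : Trace) (r : Res)
      (τ₄ : Trace) (r' : Res),
      TRed ⟨tin .while_ τ, E, H, .expr e⟩ ⟨τ₂, r⟩ →
      TRed ⟨τ₂, E, H, .while1 r a e s⟩ ⟨τ₄, r'⟩ →
      TRed ⟨τ, E, H, .stat (.whileDo a e s)⟩ ⟨tout .while_ τ₄, r'⟩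
  | whileTrue1 : ∀ (τ : Trace) (E : Env) (H : Heap)
      (E' : Env) (H' : Heap) (a : α) (e : Expr α) (s : Stat α)
      (τ₂ : Trace) (r : Res)
      (τ₄ : Trace) (r' : Res),
      TRed ⟨tin .whileTrue1 τ, E', H', .stat s⟩ ⟨τ₂, r⟩ →
      TRed ⟨τ₂, E', H', .while2 r a e s⟩ ⟨τ₄, r'⟩ →
      TRed ⟨τ, E, H, .while1 (.val E' H' (.bool true)) a e s⟩
        ⟨tout .whileTrue1 τ₄, r'⟩
  | whileTrue2 : ∀ (τ : Trace) (E : Env) (H : Heap)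
      (E' : Env) (H' : Heap) (a : α) (e : Expr α) (s : Stat α)
      (τ₂ : Trace) (r : Res),
      TRed ⟨tin .whileTrue2 τ, E', H', .stat (.whileDo a e s)⟩ ⟨τ₂, r⟩ →
      TRed ⟨τ, E, H, .while2 (.st E' H') a e s⟩ ⟨tout .whileTrue2 τ₂, r⟩
  | whileFalse : ∀ (τ : Trace) (E : Env) (H : Heap)
      (E' : Env) (H' : Heap) (a : α) (e : Expr α) (s : Stat α),
      TRed ⟨τ, E, H, .while1 (.val E' H' (.bool false)) a e s⟩
        ⟨tax .whileFalse τ, .st E' H'⟩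
  | asg : ∀ (τ : Trace) (E : Env) (H : Heap) (a : α)
      (x : Var) (e : Expr α) (τ₂ : Trace) (r : Res)
      (τ₄ : Trace) (r' : Res),
      TRed ⟨tin .asg τ, E, H, .expr e⟩ ⟨τ₂, r⟩ →
      TRed ⟨τ₂, E, H, .asgn1 x r⟩ ⟨τ₄, r'⟩ →
      TRed ⟨τ, E, H, .stat (.asgn a x e)⟩ ⟨tout .asg τ₄, r'⟩
  | asg1 : ∀ (τ : Trace) (E₀ : Env) (H₀ : Heap)
      (E : Env) (H : Heap) (x : Var) (v : Val),
      TRed ⟨τ, E₀, H₀, .asgn1 x (.val E H v)⟩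
        ⟨tax .asg1 τ,
         .st (fupd E x (some v)) H⟩
  | fldAsg : ∀ (τ : Trace) (E : Env) (H : Heap) (a : α)
      (e₁ : Expr α) (f : FieldName) (e₂ : Expr α)
      (τ₂ : Trace) (r : Res)
      (τ₄ : Trace) (r' : Res),
      TRed ⟨tin .fldAsg τ, E, H, .expr e₁⟩ ⟨τ₂, r⟩ →
      TRed ⟨τ₂, E, H, .fldAsgn1 r f e₂⟩ ⟨τ₄, r'⟩ →
      TRed ⟨τ, E, H, .stat (.fldAsgn a e₁ f e₂)⟩ ⟨tout .fldAsg τ₄, r'⟩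
  | fldAsg1 : ∀ (τ : Trace) (E : Env) (H : Heap)
      (E' : Env) (H' : Heap) (l : Loc) (f : FieldName) (e : Expr α)
      (τ₂ : Trace) (r : Res)
      (τ₄ : Trace) (r' : Res),
      TRed ⟨tin .fldAsg1 τ, E', H', .expr e⟩ ⟨τ₂, r⟩ →
      TRed ⟨τ₂, E', H', .fldAsgn2 l f r⟩ ⟨τ₄, r'⟩ →
      TRed ⟨τ, E, H, .fldAsgn1 (.val E' H' (.loc l)) f e⟩
        ⟨tout .fldAsg1 τ₄, r'⟩
  | fldAsg2 : ∀ (τ : Trace) (E₀ : Env) (H₀ : Heap)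
      (E : Env) (H : Heap) (v : Val) (l : Loc) (f : FieldName) (o : ObjV),
      H l = some o →
      TRed ⟨τ, E₀, H₀, .fldAsgn2 l f (.val E H v)⟩
        ⟨tax .fldAsg2 τ,
         .st E (fupd H l (some (fupd o f (some v))))⟩
  | del : ∀ (τ : Trace) (E : Env) (H : Heap) (a : α)
      (e : Expr α) (f : FieldName)
      (τ₂ : Trace) (r : Res)
      (τ₄ : Trace) (r' : Res),
      TRed ⟨tin .del τ, E, H, .expr e⟩ ⟨τ₂, r⟩ →
      TRed ⟨τ₂, E, H, .del1 r f⟩ ⟨τ₄, r'⟩ →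
      TRed ⟨τ, E, H, .stat (.del a e f)⟩ ⟨tout .del τ₄, r'⟩
  | del1 : ∀ (τ : Trace) (E₀ : Env) (H₀ : Heap)
      (E : Env) (H : Heap) (l : Loc) (f : FieldName) (o : ObjV),
      H l = some o →
      (o f).isSome →
      TRed ⟨τ, E₀, H₀, .del1 (.val E H (.loc l)) f⟩
        ⟨tax .del1 τ, .st E (fupd H l (some (fupd o f none)))⟩
  | cst : ∀ (τ : Trace) (E : Env) (H : Heap)
      (a : α) (c : Bool),
      TRed ⟨τ, E, H, .expr (.cst a c)⟩ ⟨tax .cst τ, .val E H (.bool c)⟩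
  | var : ∀ (τ : Trace) (E : Env) (H : Heap)
      (a : α) (x : Var) (v : Val),
      E x = some v →
      TRed ⟨τ, E, H, .expr (.var a x)⟩
        ⟨tax .var τ, .val E H v⟩
  | bin : ∀ (τ : Trace) (E : Env) (H : Heap)
      (a : α) (op : Op) (e₁ e₂ : Expr α)
      (τ₂ : Trace) (r : Res)
      (τ₄ : Trace) (r' : Res),
      TRed ⟨tin .bin τ, E, H, .expr e₁⟩ ⟨τ₂, r⟩ →
      TRed ⟨τ₂, E, H, .bin1 op r e₂⟩ ⟨τ₄, r'⟩ →
      TRed ⟨τ, E, H, .expr (.bin a op e₁ e₂)⟩ ⟨tout .bin τ₄, r'⟩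
  | bin1 : ∀ (τ : Trace) (E : Env) (H : Heap)
      (E' : Env) (H' : Heap) (op : Op) (v₁ : Val) (e₂ : Expr α)
      (τ₂ : Trace) (r : Res)
      (τ₄ : Trace) (r' : Res),
      TRed ⟨tin .bin1 τ, E', H', .expr e₂⟩ ⟨τ₂, r⟩ →
      TRed ⟨τ₂, E', H', .bin2 op v₁ r⟩ ⟨τ₄, r'⟩ →
      TRed ⟨τ, E, H, .bin1 op (.val E' H' v₁) e₂⟩ ⟨tout .bin1 τ₄, r'⟩
  | bin2 : ∀ (τ : Trace) (E₀ : Env) (H₀ : Heap)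
      (E : Env) (H : Heap) (op : Op) (b₁ b₂ : Bool),
      TRed ⟨τ, E₀, H₀, .bin2 op (.bool b₁) (.val E H (.bool b₂))⟩
        ⟨tax .bin2 τ, .val E H (.bool (op b₁ b₂))⟩
  | obj : ∀ (τ : Trace) (E : Env) (H : Heap)
      (a : α) (l : Loc),
      H l = none →
      (∀ l' : Loc, l' < l → H l' ≠ none) →
      TRed ⟨τ, E, H, .expr (.obj a)⟩
        ⟨tax .obj τ,
         .val E (fupd H l (some (fun _ => none))) (.loc l)⟩
  | fld : ∀ (τ : Trace) (E : Env) (H : Heap)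
      (a : α) (e : Expr α) (f : FieldName)
      (τ₂ : Trace) (r : Res)
      (τ₄ : Trace) (r' : Res),
      TRed ⟨tin .fld τ, E, H, .expr e⟩ ⟨τ₂, r⟩ →
      TRed ⟨τ₂, E, H, .fld1 r f⟩ ⟨τ₄, r'⟩ →
      TRed ⟨τ, E, H, .expr (.fld a e f)⟩ ⟨tout .fld τ₄, r'⟩
  | fld1 : ∀ (τ : Trace) (E₀ : Env) (H₀ : Heap)
      (E : Env) (H : Heap) (l : Loc) (f : FieldName) (o : ObjV) (v : Val),
      H l = some o →
      o f = some v →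
      TRed ⟨τ, E₀, H₀, .fld1 (.val E H (.loc l)) f⟩
        ⟨tax .fld1 τ, .val E H v⟩
  | abort : ∀ (τ : Trace) (E : Env) (H : Heap)
      (t : ExtTerm α) (r : Res),
      abortFn t = some r →
      TRed ⟨τ, E, H, t⟩ ⟨tax .abort τ, r⟩

/-! ## Occurrences of rules in derivation trees

Since the semantics is deterministic (in particular allocation picks the
least fresh location), a derivation tree is entirely determined by its root
configuration.  `TChild c c'` states that `c'` is the configuration of a
premise of the rule applied at `c`, and `TOcc c₀ c` states that the rule
occurrence at configuration `c` belongs to the derivation tree rooted at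
`c₀`. -/
inductive TChild {α : Type} : TConf α → TConf α → Prop where
  | seqL : ∀ (τ : Trace) (E : Env) (H : Heap) (a : α) (s₁ s₂ : Stat α),
      TChild ⟨τ, E, H, .stat (.seq a s₁ s₂)⟩ ⟨tin .seq τ, E, H, .stat s₁⟩
  | seqR : ∀ (τ : Trace) (E : Env) (H : Heap) (a : α) (s₁ s₂ : Stat α)
      (τ₂ : Trace) (r : Res),
      TRed ⟨tin .seq τ, E, H, .stat s₁⟩ ⟨τ₂, r⟩ →
      TChild ⟨τ, E, H, .stat (.seq a s₁ s₂)⟩ ⟨τ₂, E, H, .seq1 r s₂⟩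
  | seq1C : ∀ (τ : Trace) (E : Env) (H : Heap)
      (E' : Env) (H' : Heap) (s : Stat α),
      TChild ⟨τ, E, H, .seq1 (.st E' H') s⟩ ⟨tin .seq1 τ, E', H', .stat s⟩
  | ifL : ∀ (τ : Trace) (E : Env) (H : Heap) (a : α)
      (e : Expr α) (s₁ s₂ : Stat α),
      TChild ⟨τ, E, H, .stat (.ite a e s₁ s₂)⟩ ⟨tin .if_ τ, E, H, .expr e⟩
  | ifR : ∀ (τ : Trace) (E : Env) (H : Heap) (a : α)
      (e : Expr α) (s₁ s₂ : Stat α) (τ₂ : Trace) (r : Res),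
      TRed ⟨tin .if_ τ, E, H, .expr e⟩ ⟨τ₂, r⟩ →
      TChild ⟨τ, E, H, .stat (.ite a e s₁ s₂)⟩ ⟨τ₂, E, H, .if1 r s₁ s₂⟩
  | ifTrueC : ∀ (τ : Trace) (E : Env) (H : Heap)
      (E' : Env) (H' : Heap) (s₁ s₂ : Stat α),
      TChild ⟨τ, E, H, .if1 (.val E' H' (.bool true)) s₁ s₂⟩
        ⟨tin .ifTrue τ, E', H', .stat s₁⟩
  | ifFalseC : ∀ (τ : Trace) (E : Env) (H : Heap)
      (E' : Env) (H' : Heap) (s₁ s₂ : Stat α),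
      TChild ⟨τ, E, H, .if1 (.val E' H' (.bool false)) s₁ s₂⟩
        ⟨tin .ifFalse τ, E', H', .stat s₂⟩
  | whileL : ∀ (τ : Trace) (E : Env) (H : Heap) (a : α)
      (e : Expr α) (s : Stat α),
      TChild ⟨τ, E, H, .stat (.whileDo a e s)⟩ ⟨tin .while_ τ, E, H, .expr e⟩
  | whileR : ∀ (τ : Trace) (E : Env) (H : Heap) (a : α)
      (e : Expr α) (s : Stat α) (τ₂ : Trace) (r : Res),
      TRed ⟨tin .while_ τ, E, H, .expr e⟩ ⟨τ₂, r⟩ →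
      TChild ⟨τ, E, H, .stat (.whileDo a e s)⟩ ⟨τ₂, E, H, .while1 r a e s⟩
  | whileTrue1L : ∀ (τ : Trace) (E : Env) (H : Heap)
      (E' : Env) (H' : Heap) (a : α) (e : Expr α) (s : Stat α),
      TChild ⟨τ, E, H, .while1 (.val E' H' (.bool true)) a e s⟩
        ⟨tin .whileTrue1 τ, E', H', .stat s⟩
  | whileTrue1R : ∀ (τ : Trace) (E : Env) (H : Heap)
      (E' : Env) (H' : Heap) (a : α) (e : Expr α) (s : Stat α)
      (τ₂ : Trace) (r : Res),
      TRed ⟨tin .whileTrue1 τ, E', H', .stat s⟩ ⟨τ₂, r⟩ →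
      TChild ⟨τ, E, H, .while1 (.val E' H' (.bool true)) a e s⟩
        ⟨τ₂, E', H', .while2 r a e s⟩
  | whileTrue2C : ∀ (τ : Trace) (E : Env) (H : Heap)
      (E' : Env) (H' : Heap) (a : α) (e : Expr α) (s : Stat α),
      TChild ⟨τ, E, H, .while2 (.st E' H') a e s⟩
        ⟨tin .whileTrue2 τ, E', H', .stat (.whileDo a e s)⟩
  | asgL : ∀ (τ : Trace) (E : Env) (H : Heap) (a : α)
      (x : Var) (e : Expr α),
      TChild ⟨τ, E, H, .stat (.asgn a x e)⟩ ⟨tin .asg τ, E, H, .expr e⟩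
  | asgR : ∀ (τ : Trace) (E : Env) (H : Heap) (a : α)
      (x : Var) (e : Expr α) (τ₂ : Trace) (r : Res),
      TRed ⟨tin .asg τ, E, H, .expr e⟩ ⟨τ₂, r⟩ →
      TChild ⟨τ, E, H, .stat (.asgn a x e)⟩ ⟨τ₂, E, H, .asgn1 x r⟩
  | fldAsgL : ∀ (τ : Trace) (E : Env) (H : Heap) (a : α)
      (e₁ : Expr α) (f : FieldName) (e₂ : Expr α),
      TChild ⟨τ, E, H, .stat (.fldAsgn a e₁ f e₂)⟩
        ⟨tin .fldAsg τ, E, H, .expr e₁⟩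
  | fldAsgR : ∀ (τ : Trace) (E : Env) (H : Heap) (a : α)
      (e₁ : Expr α) (f : FieldName) (e₂ : Expr α)
      (τ₂ : Trace) (r : Res),
      TRed ⟨tin .fldAsg τ, E, H, .expr e₁⟩ ⟨τ₂, r⟩ →
      TChild ⟨τ, E, H, .stat (.fldAsgn a e₁ f e₂)⟩
        ⟨τ₂, E, H, .fldAsgn1 r f e₂⟩
  | fldAsg1L : ∀ (τ : Trace) (E : Env) (H : Heap)
      (E' : Env) (H' : Heap) (l : Loc) (f : FieldName) (e : Expr α),
      TChild ⟨τ, E, H, .fldAsgn1 (.val E' H' (.loc l)) f e⟩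
        ⟨tin .fldAsg1 τ, E', H', .expr e⟩
  | fldAsg1R : ∀ (τ : Trace) (E : Env) (H : Heap)
      (E' : Env) (H' : Heap) (l : Loc) (f : FieldName) (e : Expr α)
      (τ₂ : Trace) (r : Res),
      TRed ⟨tin .fldAsg1 τ, E', H', .expr e⟩ ⟨τ₂, r⟩ →
      TChild ⟨τ, E, H, .fldAsgn1 (.val E' H' (.loc l)) f e⟩
        ⟨τ₂, E', H', .fldAsgn2 l f r⟩
  | delL : ∀ (τ : Trace) (E : Env) (H : Heap) (a : α)
      (e : Expr α) (f : FieldName),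
      TChild ⟨τ, E, H, .stat (.del a e f)⟩ ⟨tin .del τ, E, H, .expr e⟩
  | delR : ∀ (τ : Trace) (E : Env) (H : Heap) (a : α)
      (e : Expr α) (f : FieldName)
      (τ₂ : Trace) (r : Res),
      TRed ⟨tin .del τ, E, H, .expr e⟩ ⟨τ₂, r⟩ →
      TChild ⟨τ, E, H, .stat (.del a e f)⟩ ⟨τ₂, E, H, .del1 r f⟩
  | binL : ∀ (τ : Trace) (E : Env) (H : Heap) (a : α)
      (op : Op) (e₁ e₂ : Expr α),
      TChild ⟨τ, E, H, .expr (.bin a op e₁ e₂)⟩ ⟨tin .bin τ, E, H, .expr e₁⟩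
  | binR : ∀ (τ : Trace) (E : Env) (H : Heap) (a : α)
      (op : Op) (e₁ e₂ : Expr α) (τ₂ : Trace) (r : Res),
      TRed ⟨tin .bin τ, E, H, .expr e₁⟩ ⟨τ₂, r⟩ →
      TChild ⟨τ, E, H, .expr (.bin a op e₁ e₂)⟩
        ⟨τ₂, E, H, .bin1 op r e₂⟩
  | bin1L : ∀ (τ : Trace) (E : Env) (H : Heap)
      (E' : Env) (H' : Heap) (op : Op) (v₁ : Val) (e₂ : Expr α),
      TChild ⟨τ, E, H, .bin1 op (.val E' H' v₁) e₂⟩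
        ⟨tin .bin1 τ, E', H', .expr e₂⟩
  | bin1R : ∀ (τ : Trace) (E : Env) (H : Heap)
      (E' : Env) (H' : Heap) (op : Op) (v₁ : Val) (e₂ : Expr α)
      (τ₂ : Trace) (r : Res),
      TRed ⟨tin .bin1 τ, E', H', .expr e₂⟩ ⟨τ₂, r⟩ →
      TChild ⟨τ, E, H, .bin1 op (.val E' H' v₁) e₂⟩
        ⟨τ₂, E', H', .bin2 op v₁ r⟩
  | fldL : ∀ (τ : Trace) (E : Env) (H : Heap) (a : α)
      (e : Expr α) (f : FieldName),
      TChild ⟨τ, E, H, .expr (.fld a e f)⟩ ⟨tin .fld τ, E, H, .expr e⟩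
  | fldR : ∀ (τ : Trace) (E : Env) (H : Heap) (a : α)
      (e : Expr α) (f : FieldName)
      (τ₂ : Trace) (r : Res),
      TRed ⟨tin .fld τ, E, H, .expr e⟩ ⟨τ₂, r⟩ →
      TChild ⟨τ, E, H, .expr (.fld a e f)⟩ ⟨τ₂, E, H, .fld1 r f⟩

/-- `TOcc c₀ c`: the configuration `c` occurs in the derivation tree rooted
at `c₀`. -/
inductive TOcc {α : Type} : TConf α → TConf α → Prop where
  | refl : ∀ c : TConf α, TOcc c c
  | step : ∀ c c' c'' : TConf α, TOcc c c' → TChild c' c'' → TOcc c c''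


/-! ### Erasure, instrumentation and determinism -/

/-- Erasure of the traces of an instrumented derivation. -/
theorem TRed.erase {α : Type} {c : TConf α} {o : TOut} (h : TRed c o) :
    Red c.E c.H c.t o.r := by
  induction h <;> (constructor <;> assumption)

/-- Every plain derivation can be instrumented from any initial trace. -/
theorem Red.instrument {α : Type} {E : Env} {H : Heap} {t : ExtTerm α} {r : Res}
    (h : Red E H t r) : ∀ τ : Trace, ∃ τ' : Trace, TRed ⟨τ, E, H, t⟩ ⟨τ', r⟩ := by
  induction h
  case seq | if_ | while_ | whileTrue1 | asg | fldAsg | fldAsg1 | del | bin | bin1 | fld =>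
    rename_i ih₁ ih₂
    -- Skolemizing turns the induction hypotheses into instrumented derivations
    -- for every incoming trace, so that the rule itself threads the traces.
    choose f₁ hf₁ using ih₁
    choose f₂ hf₂ using ih₂
    intro τ
    apply Exists.intro
    constructor
    · apply hf₁
    · apply hf₂
  case seq1 | ifTrue | ifFalse | whileTrue2 =>
    rename_i ih
    choose f hf using ih
    intro τ
    apply Exists.intro
    constructor
    apply hf
  all_goals
    intro τ
    apply Exists.intro
    constructor <;> assumption

/-- A location that is fresh and minimal among fresh ones is unique. -/
theorem least_fresh_unique {H : Heap} {l l' : Loc} (h : H l = none)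
    (hmin : ∀ k : Loc, k < l → H k ≠ none) (h' : H l' = none)
    (hmin' : ∀ k : Loc, k < l' → H k ≠ none) : l = l' :=
  le_antisymm (not_lt.1 fun hlt => hmin l' hlt h') (not_lt.1 fun hlt => hmin' l hlt h)

/-- A configuration determines both the final trace and the result. -/
theorem TRed.deterministic {α : Type} {c : TConf α} {o o' : TOut} (h : TRed c o)
    (h' : TRed c o') : o = o' := by
  induction h generalizing o'
  case seq | if_ | while_ | whileTrue1 | asg | fldAsg | fldAsg1 | del | bin | bin1 | fld =>
    rename_i ih₁ ih₂
    cases h'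
    case abort h => simp [abortFn, Res.errOf] at h
    rename_i h₁ h₂
    -- The outputs of the first premise must be identified before the second
    -- premises have a common configuration. For some rules the case analysis
    -- leaves the two premises in the reverse order.
    first
    | cases ih₁ h₁
      cases ih₂ h₂
      rfl
    | cases ih₁ h₂
      cases ih₂ h₁
      rfl
  case seq1 | ifTrue | ifFalse | whileTrue2 =>
    rename_i ih
    cases h'
    case abort h => simp [abortFn, Res.errOf] at h
    rename_i h₁
    cases ih h₁
    rfl
  case abort ha =>
    cases h' <;> simp_all [abortFn, Res.errOf]
  case obj h hmin =>
    cases h'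
    case abort h => simp [abortFn] at h
    rename_i h₁ hmin₁
    cases least_fresh_unique h hmin h₁ hmin₁
    rfl
  all_goals
    cases h'
    case abort h => simp [abortFn, Res.errOf] at h
    all_goals simp_all

/-! ## STATEMENT 8

The trace instrumentation is conservative: erasing the trace components of
any derivation of the trace-instrumented semantics `τ, S, t → τ', r` yields a
derivation of the plain pretty-big-step semantics `S, t → r`; conversely, for
every derivation of `S, t → r` and every initial trace `τ` there exists a
(unique) trace-instrumented derivation `τ, S, t → τ', r`.  In particular the
instrumentation adds no information to the evaluation relation:
`S, t → r` holds if and only if `τ, S, t → τ', r` holds for some `τ'`. -/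
theorem trace_instrumentation_conservative {α : Type} :
    -- erasing the traces of a trace-instrumented derivation yields a plain one
    (∀ (τ : Trace) (E : Env) (H : Heap) (t : ExtTerm α) (τ' : Trace) (r : Res),
        TRed ⟨τ, E, H, t⟩ ⟨τ', r⟩ → Red E H t r) ∧
    -- conversely, every plain derivation can be instrumented, for any initial
    -- trace `τ`, with a unique resulting trace `τ'`
    (∀ (E : Env) (H : Heap) (t : ExtTerm α) (r : Res),
        Red E H t r → ∀ τ : Trace, ∃! τ' : Trace, TRed ⟨τ, E, H, t⟩ ⟨τ', r⟩) ∧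
    -- in particular, the two evaluation relations agree
    (∀ (E : Env) (H : Heap) (t : ExtTerm α) (r : Res) (τ : Trace),
        Red E H t r ↔ ∃ τ' : Trace, TRed ⟨τ, E, H, t⟩ ⟨τ', r⟩) := by
  refine ⟨fun _ _ _ _ _ _ h => h.erase, fun _ _ _ _ h τ => ?_,
    fun _ _ _ _ τ => ⟨fun h => h.instrument τ, fun ⟨_, h⟩ => h.erase⟩⟩
  obtain ⟨τ', hτ'⟩ := h.instrument τ
  exact ⟨τ', hτ', fun _ h' => congrArg TOut.τ (h'.deterministic hτ')⟩
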